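/- arXiv:1907.04384 — 3 statements merged into one kernel-verified Lean document; each statement's English description precedes it below -/
import Mathlib

section
/- Let D be an integral domain and let Γ be a set of nonzero proper finitely generated ideals of D such that every nonzero proper finitely generated ideal of D is contained in some member of Γ. Then D has finite character (every nonzero nonunit lies in at most finitely many maximal ideals) if and only if every nonzero proper finitely generated ideal I of D is contained in at least one member of Γ and every set of pairwise comaximal members of Γ, each containing I, is finite. -/
/-!
Call a finitely generated ideal homogeneous if it lies in exactly one maximal ideal, and suppose
that comaximal sets of finitely generated proper ideals over `I` are finite. A finitely generated
proper ideal lying in two distinct maximal ideals sits below two comaximal finitely generated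
proper ideals. Splitting one of the two again and again would produce infinitely many pairwise
comaximal ideals, so every finitely generated proper ideal over `I` lies in a homogeneous one.
Homogeneous ideals in distinct maximal ideals are comaximal, so only finitely many maximal ideals
contain a homogeneous ideal over `I`. Any maximal `M` over `I` is covered by these: for `y ∈ M`, the
ideal `I + (y)` lies in a homogeneous ideal. By prime avoidance, `M` is one of them.
-/

open Set Function

section CodisjointSubsets

variable {α : Type*} [PartialOrder α] [OrderTop α] {s t : Set α}

/-- Every pairwise codisjoint subset of `s` is finite. For sets of ideals, codisjoint means
comaximal. -/
def CodisjointSubsetsFinite (s : Set α) : Prop :=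
  ∀ t ⊆ s, t.Pairwise Codisjoint → t.Finite

namespace CodisjointSubsetsFinite

theorem of_finite (hs : s.Finite) : CodisjointSubsetsFinite s :=
  fun _ hts _ => hs.subset hts

theorem finite_of_mapsTo {ι : Type*} {u : Set ι} {f : ι → α} (hs : CodisjointSubsetsFinite s)
    (htop : ⊤ ∉ s) (hf : MapsTo f u s) (hu : u.Pairwise (Codisjoint on f)) : u.Finite := by
  have hinj : InjOn f u := fun i hi j hj hij => by
    by_contra hne
    exact (hu hi hj hne).ne (ne_of_mem_of_not_mem (hf hi) htop) hij
  exact (hs (f '' u) hf.image_subset (hinj.pairwise_image.mpr hu)).of_finite_image hinj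

theorem of_forall_exists_le (ht : CodisjointSubsetsFinite t) (htop : ⊤ ∉ t)
    (hst : ∀ a ∈ s, ∃ b ∈ t, a ≤ b) : CodisjointSubsetsFinite s := by
  intro u hus hu
  choose! g hgt hg using hst
  exact ht.finite_of_mapsTo htop (fun a ha => hgt a (hus ha))
    fun a ha b hb hab => (hu ha hb hab).mono (hg a (hus ha)) (hg b (hus hb))

end CodisjointSubsetsFinite

theorem exists_seq_pairwise_codisjoint {a : α} (ha : a ∈ s)
    (hsplit : ∀ x ∈ s, a ≤ x → ∃ y ∈ s, ∃ z ∈ s, x ≤ y ∧ x ≤ z ∧ Codisjoint y z) :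
    ∃ f : ℕ → α, (∀ n, f n ∈ s) ∧ Pairwise (Codisjoint on f) := by
  choose! y hys z hzs hxy hxz hyz using hsplit
  let x : ℕ → α := fun n => z^[n] a
  have hx_succ (n : ℕ) : x (n + 1) = z (x n) := iterate_succ_apply' z n a
  have hx (n : ℕ) : x n ∈ s ∧ a ≤ x n := by
    induction n with
    | zero => exact ⟨ha, le_rfl⟩
    | succ n ih =>
      rw [hx_succ]
      exact ⟨hzs _ ih.1 ih.2, ih.2.trans (hxz _ ih.1 ih.2)⟩
  have hx_mono : Monotone x := monotone_nat_of_le_succ fun n => by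
    rw [hx_succ]
    exact hxz _ (hx n).1 (hx n).2
  refine ⟨y ∘ x, fun n => hys _ (hx n).1 (hx n).2, (Std.Symm.pairwise_on _).mpr fun m n hmn => ?_⟩
  have hz_le : z (x m) ≤ y (x n) := calc
    z (x m) = x (m + 1) := (hx_succ m).symm
    _ ≤ x n := hx_mono hmn
    _ ≤ y (x n) := hxy _ (hx n).1 (hx n).2
  exact (hyz _ (hx m).1 (hx m).2).mono_right hz_le

theorem CodisjointSubsetsFinite.exists_ge_forall_not_codisjoint (hs : CodisjointSubsetsFinite s)
    (htop : ⊤ ∉ s) {a : α} (ha : a ∈ s) :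
    ∃ x ∈ s, a ≤ x ∧ ∀ y ∈ s, ∀ z ∈ s, x ≤ y → x ≤ z → ¬Codisjoint y z := by
  by_contra! hsplit
  obtain ⟨f, hfs, hf⟩ := exists_seq_pairwise_codisjoint ha hsplit
  exact infinite_univ (hs.finite_of_mapsTo htop (fun n _ => hfs n) (hf.set_pairwise univ))

end CodisjointSubsets

section Semiring

variable {R : Type*} [Semiring R] {I J M N : Ideal R}

/-- The finitely generated proper ideals containing `I`. -/
def fgProperIdealsOver (I : Ideal R) : Set (Ideal R) :=
  {J | J.FG ∧ J ≠ ⊤ ∧ I ≤ J}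

theorem top_notMem_fgProperIdealsOver : ⊤ ∉ fgProperIdealsOver I :=
  fun h => h.2.1 rfl

/-- A finitely generated ideal contained in exactly one maximal ideal, with the zero ideal allowed.
This is unrelated to the homogeneous ideals of a graded ring. -/
def IsHomogeneousIdeal (J : Ideal R) : Prop :=
  J.FG ∧ ∃! M : Ideal R, M.IsMaximal ∧ J ≤ M

/-- The maximal ideals containing a homogeneous ideal that contains `I`: the potent maximal
ideals, relative to `I`. -/
def potentMaximalIdealsOver (I : Ideal R) : Set (Ideal R) :=
  {M | M.IsMaximal ∧ ∃ H, IsHomogeneousIdeal H ∧ I ≤ H ∧ H ≤ M}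

theorem exists_fg_codisjoint (hJ : J.FG) (hJM : J ≤ M) (hJN : J ≤ N) (hMN : Codisjoint M N) :
    ∃ A B : Ideal R, A.FG ∧ B.FG ∧ J ≤ A ∧ A ≤ M ∧ J ≤ B ∧ B ≤ N ∧ Codisjoint A B := by
  obtain ⟨m, hm, n, hn, hmn⟩ :=
    Submodule.mem_sup.mp ((Ideal.eq_top_iff_one _).mp hMN.eq_top)
  refine ⟨J ⊔ Ideal.span {m}, J ⊔ Ideal.span {n},
    Submodule.FG.sup hJ (Submodule.fg_span_singleton m),
    Submodule.FG.sup hJ (Submodule.fg_span_singleton n), le_sup_left,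
    sup_le hJM ((Ideal.span_singleton_le_iff_mem _).mpr hm), le_sup_left,
    sup_le hJN ((Ideal.span_singleton_le_iff_mem _).mpr hn), ?_⟩
  rw [codisjoint_iff, Ideal.eq_top_iff_one, ← hmn]
  exact Submodule.add_mem_sup (Ideal.mem_sup_right (Ideal.mem_span_singleton_self m))
    (Ideal.mem_sup_right (Ideal.mem_span_singleton_self n))

theorem isHomogeneousIdeal_of_forall_not_codisjoint (hJ : J.FG) (hJ_top : J ≠ ⊤)
    (h : ∀ A ∈ fgProperIdealsOver J, ∀ B ∈ fgProperIdealsOver J, ¬Codisjoint A B) :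
    IsHomogeneousIdeal J := by
  obtain ⟨M, hM, hJM⟩ := Ideal.exists_le_maximal J hJ_top
  refine ⟨hJ, M, ⟨hM, hJM⟩, fun N ⟨hN, hJN⟩ => ?_⟩
  by_contra hNM
  obtain ⟨A, B, hA, hB, hJA, hAN, hJB, hBM, hAB⟩ :=
    exists_fg_codisjoint hJ hJN hJM (codisjoint_iff.mpr (hN.coprime_of_ne hM hNM))
  exact h A ⟨hA, ne_top_of_le_ne_top hN.ne_top hAN, hJA⟩
    B ⟨hB, ne_top_of_le_ne_top hM.ne_top hBM, hJB⟩ hAB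

theorem IsHomogeneousIdeal.codisjoint {H K : Ideal R} (hH : IsHomogeneousIdeal H)
    (hK : IsHomogeneousIdeal K) (hM : M.IsMaximal) (hHM : H ≤ M) (hN : N.IsMaximal) (hKN : K ≤ N)
    (hMN : M ≠ N) : Codisjoint H K := by
  rw [codisjoint_iff]
  by_contra hHK
  obtain ⟨Q, hQ, hHKQ⟩ := Ideal.exists_le_maximal _ hHK
  have hMQ : M = Q := hH.2.unique ⟨hM, hHM⟩ ⟨hQ, le_sup_left.trans hHKQ⟩
  have hNQ : N = Q := hK.2.unique ⟨hN, hKN⟩ ⟨hQ, le_sup_right.trans hHKQ⟩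
  exact hMN (hMQ.trans hNQ.symm)

theorem exists_isHomogeneousIdeal_ge (hI : CodisjointSubsetsFinite (fgProperIdealsOver I))
    (hJ : J ∈ fgProperIdealsOver I) : ∃ H, IsHomogeneousIdeal H ∧ J ≤ H := by
  obtain ⟨H, ⟨hH, hH_top, hIH⟩, hJH, hnot⟩ :=
    hI.exists_ge_forall_not_codisjoint top_notMem_fgProperIdealsOver hJ
  refine ⟨H, isHomogeneousIdeal_of_forall_not_codisjoint hH hH_top ?_, hJH⟩
  exact fun A ⟨hA, hA_top, hHA⟩ B ⟨hB, hB_top, hHB⟩ =>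
    hnot A ⟨hA, hA_top, hIH.trans hHA⟩ B ⟨hB, hB_top, hIH.trans hHB⟩ hHA hHB

theorem finite_potentMaximalIdealsOver
    (hI : CodisjointSubsetsFinite (fgProperIdealsOver I)) :
    (potentMaximalIdealsOver I).Finite := by
  have hpotent : ∀ M ∈ potentMaximalIdealsOver I, ∃ H, IsHomogeneousIdeal H ∧ I ≤ H ∧ H ≤ M :=
    fun _ hM => hM.2
  choose! H hH hIH hHM using hpotent
  refine hI.finite_of_mapsTo (f := H) top_notMem_fgProperIdealsOver (fun M hM => ?_)
    fun M hM N hN hMN => ?_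
  · exact ⟨(hH M hM).1, ne_top_of_le_ne_top hM.1.ne_top (hHM M hM), hIH M hM⟩
  · exact (hH M hM).codisjoint (hH N hN) hM.1 (hHM M hM) hN.1 (hHM N hN) hMN

theorem codisjointSubsetsFinite_of_finite_isMaximal {S : Set (Ideal R)} (hS : ∀ J ∈ S, J ≠ ⊤)
    (hI : {M : Ideal R | M.IsMaximal ∧ I ≤ M}.Finite) :
    CodisjointSubsetsFinite {J ∈ S | I ≤ J} := by
  refine (CodisjointSubsetsFinite.of_finite hI).of_forall_exists_le (fun h => h.1.ne_top rfl) ?_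
  rintro J ⟨hJS, hIJ⟩
  obtain ⟨M, hM, hJM⟩ := Ideal.exists_le_maximal J (hS J hJS)
  exact ⟨M, ⟨hM, hIJ.trans hJM⟩, hJM⟩

theorem codisjointSubsetsFinite_fgProperIdealsOver {S : Set (Ideal R)}
    (hI : CodisjointSubsetsFinite {J ∈ S | I ≤ J}) (hS : ∀ J ∈ S, J ≠ ⊤)
    (hcov : ∀ J ∈ fgProperIdealsOver I, ∃ K ∈ S, J ≤ K) :
    CodisjointSubsetsFinite (fgProperIdealsOver I) := by
  refine hI.of_forall_exists_le (fun htop => hS ⊤ htop.1 rfl) fun J hJ => ?_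
  obtain ⟨K, hKS, hJK⟩ := hcov J hJ
  exact ⟨K, ⟨hKS, hJ.2.2.trans hJK⟩, hJK⟩

theorem codisjointSubsetsFinite_sep_iff {S : Set (Ideal R)} :
    CodisjointSubsetsFinite {J ∈ S | I ≤ J} ↔
      ∀ T : Set (Ideal R), T ⊆ S → (∀ J ∈ T, I ≤ J) →
        (∀ J ∈ T, ∀ K ∈ T, J ≠ K → J + K = ⊤) → T.Finite := by
  simp only [CodisjointSubsetsFinite, Set.Pairwise, codisjoint_iff, Ideal.add_eq_sup,
    subset_def, mem_sep_iff, forall_and, and_imp]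

end Semiring

section CommRing

variable {R : Type*} [CommRing R] {I M : Ideal R}

theorem mem_potentMaximalIdealsOver (hI_fg : I.FG)
    (hI : CodisjointSubsetsFinite (fgProperIdealsOver I)) (hM : M.IsMaximal) (hIM : I ≤ M) :
    M ∈ potentMaximalIdealsOver I := by
  have hcover : (M : Set R) ⊆ ⋃ N ∈ potentMaximalIdealsOver I, (N : Set R) := fun y hy => by
    have hJM : I ⊔ Ideal.span {y} ≤ M :=
      sup_le hIM ((Ideal.span_singleton_le_iff_mem _).mpr hy)
    obtain ⟨H, hH, hJH⟩ := exists_isHomogeneousIdeal_ge hI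
      ⟨Submodule.FG.sup hI_fg (Submodule.fg_span_singleton y),
        ne_top_of_le_ne_top hM.ne_top hJM, le_sup_left⟩
    obtain ⟨N, hN, hHN⟩ := hH.2.exists
    have hyN : y ∈ N := hHN (hJH (Ideal.mem_sup_right (Ideal.mem_span_singleton_self y)))
    exact mem_biUnion ⟨hN, H, hH, le_sup_left.trans hJH, hHN⟩ hyN
  obtain ⟨N, hN, hMN⟩ := (Ideal.subset_union_prime_finite (finite_potentMaximalIdealsOver hI)
    (f := id) ⊥ ⊥ fun N hN _ _ => hN.1.isPrime).mp hcover
  exact hM.eq_of_le hN.1.ne_top hMN ▸ hN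

theorem finite_isMaximal_of_codisjointSubsetsFinite (hI_fg : I.FG)
    (hI : CodisjointSubsetsFinite (fgProperIdealsOver I)) :
    {M : Ideal R | M.IsMaximal ∧ I ≤ M}.Finite :=
  (finite_potentMaximalIdealsOver hI).subset
    fun _ hM => mem_potentMaximalIdealsOver hI_fg hI hM.1 hM.2

theorem stmt_6_general (Γ : Set (Ideal R)) (hΓ : ∀ J ∈ Γ, J ≠ ⊤)
    (hcov : ∀ I : Ideal R, I ≠ ⊥ → I ≠ ⊤ → I.FG → ∃ J ∈ Γ, I ≤ J) :
    (∀ x : R, x ≠ 0 → ¬ IsUnit x → {M : Ideal R | M.IsMaximal ∧ x ∈ M}.Finite) ↔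
    (∀ I : Ideal R, I ≠ ⊥ → I ≠ ⊤ → I.FG →
      (∃ J ∈ Γ, I ≤ J) ∧
      ∀ S : Set (Ideal R), S ⊆ Γ → (∀ J ∈ S, I ≤ J) →
        (∀ J ∈ S, ∀ K ∈ S, J ≠ K → J + K = ⊤) → S.Finite) := by
  simp only [← codisjointSubsetsFinite_sep_iff]
  constructor
  · intro hfin I hI_bot hI_top hI_fg
    obtain ⟨x, hxI, hx⟩ := Submodule.exists_mem_ne_zero_of_ne_bot hI_bot
    have hxu : ¬IsUnit x := fun hu => hI_top (I.eq_top_of_isUnit_mem hxI hu)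
    exact ⟨hcov I hI_bot hI_top hI_fg, codisjointSubsetsFinite_of_finite_isMaximal hΓ <|
      (hfin x hx hxu).subset fun M hM => ⟨hM.1, hM.2 hxI⟩⟩
  · intro h x hx hxu
    have hx_bot : Ideal.span {x} ≠ ⊥ := mt Ideal.span_singleton_eq_bot.mp hx
    have hx_top : Ideal.span {x} ≠ ⊤ := mt Ideal.span_singleton_eq_top.mp hxu
    have hx_fg : (Ideal.span {x}).FG := Submodule.fg_span_singleton x
    have hfgx : CodisjointSubsetsFinite (fgProperIdealsOver (Ideal.span {x})) :=
      codisjointSubsetsFinite_fgProperIdealsOver (h _ hx_bot hx_top hx_fg).2 hΓ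
        fun J ⟨hJ, hJ_top, hxJ⟩ => hcov J (ne_bot_of_le_ne_bot hx_bot hxJ) hJ_top hJ
    simpa only [Ideal.span_singleton_le_iff_mem] using
      finite_isMaximal_of_codisjointSubsetsFinite hx_fg hfgx

end CommRing

theorem stmt_6 {D : Type*} [CommRing D] [IsDomain D] (Γ : Set (Ideal D))
    (hΓ : ∀ J ∈ Γ, J ≠ ⊥ ∧ J ≠ ⊤ ∧ Ideal.FG J)
    (hcov : ∀ I : Ideal D, I ≠ ⊥ → I ≠ ⊤ → I.FG → ∃ J ∈ Γ, I ≤ J) :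
    (∀ x : D, x ≠ 0 → ¬ IsUnit x → {M : Ideal D | M.IsMaximal ∧ x ∈ M}.Finite) ↔
    (∀ I : Ideal D, I ≠ ⊥ → I ≠ ⊤ → I.FG →
      (∃ J ∈ Γ, I ≤ J) ∧
      ∀ S : Set (Ideal D), S ⊆ Γ → (∀ J ∈ S, I ≤ J) →
        (∀ J ∈ S, ∀ K ∈ S, J ≠ K → J + K = ⊤) → S.Finite) :=
  stmt_6_general Γ (fun J hJ => (hΓ J hJ).2.1) hcov
end

section
/- Let M be a nontrivial pre-Riesz monoid (M has at least one strictly positive element). Then M has a basis if and only if every strictly positive element of M exceeds (is ≥) at least one homogeneous element. Moreover, when this condition holds, every set of pairwise disjoint homogeneous elements that is maximal under inclusion among such sets is a basis of M. -/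
variable {M : Type*} [AddCommMonoid M] [PartialOrder M]

/-- `h` is homogeneous: `h` is strictly positive and any two strictly positive
elements below `h` have a common strictly positive lower bound. -/
def Homog (h : M) : Prop :=
  0 < h ∧ ∀ r s : M, 0 < r → r ≤ h → 0 < s → s ≤ h → ∃ t : M, 0 < t ∧ t ≤ r ∧ t ≤ s

/-- `x` and `y` are disjoint: no strictly positive common lower bound. -/
def Disj (x y : M) : Prop := ¬ ∃ r : M, 0 < r ∧ r ≤ x ∧ r ≤ y

/-- A disjoint set: a set of pairwise disjoint strictly positive elements. -/
def DisjSet (S : Set M) : Prop :=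
  (∀ x ∈ S, 0 < x) ∧ ∀ x ∈ S, ∀ y ∈ S, x ≠ y → Disj x y

/-- A basis: a disjoint set, maximal under inclusion among disjoint sets, all of whose
elements are homogeneous. -/
def IsBasisSet (S : Set M) : Prop :=
  DisjSet S ∧ (∀ T : Set M, DisjSet T → S ⊆ T → T = S) ∧ ∀ x ∈ S, Homog x

/-- A pre-Riesz monoid: upper directed, and every finite family of strictly positive
elements either has `0` as a greatest lower bound or admits a strictly positive
common lower bound. -/
def PreRiesz (M : Type*) [AddCommMonoid M] [PartialOrder M] : Prop :=
  (∀ a b : M, ∃ c : M, a ≤ c ∧ b ≤ c) ∧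
  ∀ s : Finset M, s.Nonempty → (∀ x ∈ s, 0 < x) →
    IsGLB (↑s : Set M) (0 : M) ∨ ∃ r : M, 0 < r ∧ ∀ x ∈ s, r ≤ x

/-!
A pairwise disjoint set of strictly positive elements is maximal exactly when it meets (is not
disjoint from) every strictly positive element, and a pairwise disjoint set of homogeneous elements
is maximal exactly when it meets every homogeneous element. If every strictly positive element lies
above a homogeneous one, then meeting the homogeneous elements is enough to meet all strictly
positive ones, so the two maximality conditions agree, and Zorn's lemma provides a basis.
Conversely, a basis meets every `x > 0` in some `r > 0` below both `x` and a basis element, and `r`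
inherits homogeneity from the latter.
-/

section Pairwise

variable {α : Type*} {r : α → α → Prop} {A S : Set α}

/-- `S` is maximal under inclusion among the subsets of `A` whose distinct elements are related
by `r`. For `r = Disj` this covers both kinds of maximal disjoint set: `A` is the set of strictly
positive elements in the definition of a basis, and the set of homogeneous elements otherwise. -/
def IsMaxPairwise (r : α → α → Prop) (A S : Set α) : Prop :=
  Maximal (fun T : Set α => T ⊆ A ∧ T.Pairwise r) S

theorem exists_isMaxPairwise (r : α → α → Prop) (A : Set α) : ∃ S, IsMaxPairwise r A S :=
  zorn_subset {S | S ⊆ A ∧ S.Pairwise r} fun c hc hchain =>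
    ⟨⋃₀ c, ⟨Set.sUnion_subset fun _ hT => (hc hT).1,
      hchain.pairwise_sUnion.2 fun _ hT => (hc hT).2⟩, fun _ => Set.subset_sUnion_of_mem⟩

theorem isMaxPairwise_iff_forall_eq :
    IsMaxPairwise r A S ↔
      (S ⊆ A ∧ S.Pairwise r) ∧ ∀ T, T ⊆ A ∧ T.Pairwise r → S ⊆ T → T = S :=
  maximal_iff.trans <| by simp only [eq_comm (a := S)]

theorem isMaxPairwise_iff_forall_exists_not [Std.Symm r] (hA : ∀ a ∈ A, ¬ r a a) :
    IsMaxPairwise r A S ↔ (S ⊆ A ∧ S.Pairwise r) ∧ ∀ a ∈ A, ∃ s ∈ S, ¬ r a s := by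
  refine ⟨fun h => ⟨h.prop, fun a ha => ?_⟩, fun ⟨hS, hmeet⟩ => ⟨hS, fun T hT hST t ht => ?_⟩⟩
  · by_contra! hrel
    have hinsert : insert a S ⊆ A ∧ (insert a S).Pairwise r :=
      ⟨Set.insert_subset ha h.prop.1, h.prop.2.insert_of_symm fun s hs _ => hrel s hs⟩
    exact hA a ha (hrel a (h.mem_of_prop_insert hinsert))
  · obtain ⟨s, hs, hts⟩ := hmeet t (hT.1 ht)
    exact hT.2.eq ht (hST hs) hts ▸ hs

end Pairwise

theorem not_disj_iff {x y : M} : ¬ Disj x y ↔ ∃ r : M, 0 < r ∧ r ≤ x ∧ r ≤ y :=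
  not_not

theorem Disj.symm {x y : M} (h : Disj x y) : Disj y x :=
  fun ⟨r, hr, hry, hrx⟩ => h ⟨r, hr, hrx, hry⟩

instance : Std.Symm (Disj : M → M → Prop) :=
  ⟨fun _ _ => Disj.symm⟩

theorem Disj.mono_left {x y z : M} (hxy : x ≤ y) (h : Disj y z) : Disj x z :=
  fun ⟨r, hr, hrx, hrz⟩ => h ⟨r, hr, hrx.trans hxy, hrz⟩

theorem not_disj_self {x : M} (hx : 0 < x) : ¬ Disj x x :=
  not_disj_iff.2 ⟨x, hx, le_rfl, le_rfl⟩

theorem Homog.of_le {h r : M} (hh : Homog h) (hr : 0 < r) (hrh : r ≤ h) : Homog r :=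
  ⟨hr, fun a b ha har hb hbr => hh.2 a b ha (har.trans hrh) hb (hbr.trans hrh)⟩

theorem isBasisSet_iff_isMaxPairwise {S : Set M} :
    IsBasisSet S ↔ IsMaxPairwise Disj {x | 0 < x} S ∧ ∀ x ∈ S, Homog x := by
  rw [isMaxPairwise_iff_forall_eq, and_assoc]
  rfl

theorem isBasisSet_iff_forall_exists_not_disj {S : Set M} :
    IsBasisSet S ↔
      S.Pairwise Disj ∧ (∀ x ∈ S, Homog x) ∧ ∀ x : M, 0 < x → ∃ s ∈ S, ¬ Disj x s := by
  rw [isBasisSet_iff_isMaxPairwise,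
    isMaxPairwise_iff_forall_exists_not (A := {x : M | 0 < x}) fun _ hx => not_disj_self hx]
  exact ⟨fun ⟨⟨⟨_, hdisj⟩, hmeet⟩, hhom⟩ => ⟨hdisj, hhom, hmeet⟩,
    fun ⟨hdisj, hhom, hmeet⟩ => ⟨⟨⟨fun x hx => (hhom x hx).1, hdisj⟩, hmeet⟩, hhom⟩⟩

theorem IsBasisSet.exists_homog_le {S : Set M} (hS : IsBasisSet S) {x : M} (hx : 0 < x) :
    ∃ h : M, Homog h ∧ h ≤ x := by
  obtain ⟨-, hhom, hmeet⟩ := isBasisSet_iff_forall_exists_not_disj.1 hS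
  obtain ⟨s, hs, hxs⟩ := hmeet x hx
  obtain ⟨r, hr, hrx, hrs⟩ := not_disj_iff.1 hxs
  exact ⟨r, (hhom s hs).of_le hr hrs, hrx⟩

theorem IsMaxPairwise.isBasisSet {S : Set M} (hS : IsMaxPairwise Disj {h | Homog h} S)
    (hbelow : ∀ x : M, 0 < x → ∃ h : M, Homog h ∧ h ≤ x) : IsBasisSet S := by
  obtain ⟨⟨hhom, hdisj⟩, hmeet⟩ :=
    (isMaxPairwise_iff_forall_exists_not fun _ hh => not_disj_self hh.1).1 hS
  refine isBasisSet_iff_forall_exists_not_disj.2 ⟨hdisj, hhom, fun x hx => ?_⟩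
  obtain ⟨h, hh, hhx⟩ := hbelow x hx
  obtain ⟨s, hs, hhs⟩ := hmeet h hh
  exact ⟨s, hs, mt (Disj.mono_left hhx) hhs⟩

theorem stmt_11_general {M : Type*} [AddCommMonoid M] [PartialOrder M] :
    ((∃ S : Set M, IsBasisSet S) ↔ ∀ x : M, 0 < x → ∃ h : M, Homog h ∧ h ≤ x) ∧
    ((∀ x : M, 0 < x → ∃ h : M, Homog h ∧ h ≤ x) →
      ∀ S : Set M, (∀ x ∈ S, Homog x) → (∀ x ∈ S, ∀ y ∈ S, x ≠ y → Disj x y) →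
        (∀ T : Set M, (∀ x ∈ T, Homog x) → (∀ x ∈ T, ∀ y ∈ T, x ≠ y → Disj x y) →
          S ⊆ T → T = S) →
        IsBasisSet S) := by
  refine ⟨⟨fun ⟨_, hS⟩ _ hx => hS.exists_homog_le hx, fun hbelow => ?_⟩,
    fun hbelow S hhom hdisj hmax => ?_⟩
  · obtain ⟨S, hS⟩ := exists_isMaxPairwise Disj {h : M | Homog h}
    exact ⟨S, hS.isBasisSet hbelow⟩
  · have hS : IsMaxPairwise Disj {h : M | Homog h} S :=
      isMaxPairwise_iff_forall_eq.2 ⟨⟨hhom, hdisj⟩, fun T hT => hmax T hT.1 hT.2⟩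
    exact hS.isBasisSet hbelow

theorem stmt_11 {M : Type*} [AddCommMonoid M] [PartialOrder M]
    (hcomp : ∀ a b c : M, a ≤ b → a + c ≤ b + c) (hbot : ∀ x : M, 0 ≤ x)
    (hnt : ∃ x : M, 0 < x) (hpR : PreRiesz M) :
    ((∃ S : Set M, IsBasisSet S) ↔ ∀ x : M, 0 < x → ∃ h : M, Homog h ∧ h ≤ x) ∧
    ((∀ x : M, 0 < x → ∃ h : M, Homog h ∧ h ≤ x) →
      ∀ S : Set M, (∀ x ∈ S, Homog x) → (∀ x ∈ S, ∀ y ∈ S, x ≠ y → Disj x y) →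
        (∀ T : Set M, (∀ x ∈ T, Homog x) → (∀ x ∈ T, ∀ y ∈ T, x ≠ y → Disj x y) →
          S ⊆ T → T = S) →
        IsBasisSet S) :=
  stmt_11_general
end

section
/- Let G be a partially ordered abelian group (the partial order is translation invariant) in which every nonnegative element is primal: for all x, a, b ∈ G with 0 ≤ x, 0 ≤ a, 0 ≤ b and x ≤ a + b, there exist u, v ∈ G with 0 ≤ u ≤ a, 0 ≤ v ≤ b and x = u + v. Then G satisfies the Riesz interpolation property: for all p, q, r, s ∈ G with p ≤ r, p ≤ s, q ≤ r, q ≤ s, there exists z ∈ G with p ≤ z, q ≤ z, z ≤ r and z ≤ s. In particular, if G is directed, then G is a Riesz group. -/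
/-! Since `q ≤ s`, the element `r - p` lies below `(r - q) + (s - p)`. A primal decomposition
`r - p = u + v` along this sum means that `r` and `p` meet in the point `z = -u + r = v + p`: the
first expression, with `0 ≤ u ≤ r - q`, puts `z` between `q` and `r`, and the second, with
`0 ≤ v ≤ s - p`, puts it between `p` and `s`. -/

/-- The primal elements of an ordered additive monoid, as in the Riesz decomposition property.
Positivity of `x` is kept out of the definition: the notion is intended for `0 ≤ x`. -/
def IsAddPrimal {M : Type*} [AddZeroClass M] [LE M] (x : M) : Prop :=
  ∀ a b : M, 0 ≤ a → 0 ≤ b → x ≤ a + b →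
    ∃ u v : M, 0 ≤ u ∧ u ≤ a ∧ 0 ≤ v ∧ v ≤ b ∧ x = u + v

/-- The `(2,2)` Riesz interpolation property of an order: two elements lying below two others can
be separated from them by a single element. -/
def RieszInterpolation (α : Type*) [LE α] : Prop :=
  ∀ p q r s : α, p ≤ r → p ≤ s → q ≤ r → q ≤ s →
    ∃ z : α, p ≤ z ∧ q ≤ z ∧ z ≤ r ∧ z ≤ s

section AddGroup

variable {G : Type*} [AddGroup G] [Preorder G] [AddLeftMono G] [AddRightMono G]

theorem IsAddPrimal.exists_interpolant {p q r s : G} (hprimal : IsAddPrimal (r - p))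
    (hps : p ≤ s) (hqr : q ≤ r) (hqs : q ≤ s) :
    ∃ z : G, p ≤ z ∧ q ≤ z ∧ z ≤ r ∧ z ≤ s := by
  have sub_le_add : r - p ≤ (r - q) + (s - p) :=
    calc r - p = (r - q) + (q - p) := (sub_add_sub_cancel r q p).symm
      _ ≤ (r - q) + (s - p) := by gcongr
  obtain ⟨u, v, hu, hu_le, hv, hv_le, hsum⟩ :=
    hprimal (r - q) (s - p) (sub_nonneg.2 hqr) (sub_nonneg.2 hps) sub_le_add
  have r_eq : r = u + (v + p) := by rw [← add_assoc, ← hsum, sub_add_cancel]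
  have add_q_le : u + q ≤ u + (v + p) := r_eq ▸ le_sub_iff_add_le.1 hu_le
  exact ⟨v + p, le_add_of_nonneg_left hv, le_of_add_le_add_left add_q_le,
    r_eq ▸ le_add_of_nonneg_left hu, le_sub_iff_add_le.1 hv_le⟩

theorem stmt_16_general (hprimal : ∀ x : G, 0 ≤ x → IsAddPrimal x) : RieszInterpolation G :=
  fun _p _q _r _s hpr hps hqr hqs =>
    (hprimal _ (sub_nonneg.2 hpr)).exists_interpolant hps hqr hqs

end AddGroup

theorem stmt_16 {G : Type*} [AddCommGroup G] [PartialOrder G]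
    [CovariantClass G G (· + ·) (· ≤ ·)]
    (hprimal : ∀ x a b : G, 0 ≤ x → 0 ≤ a → 0 ≤ b → x ≤ a + b →
      ∃ u v : G, 0 ≤ u ∧ u ≤ a ∧ 0 ≤ v ∧ v ≤ b ∧ x = u + v) :
    ∀ p q r s : G, p ≤ r → p ≤ s → q ≤ r → q ≤ s →
      ∃ z : G, p ≤ z ∧ q ≤ z ∧ z ≤ r ∧ z ≤ s :=
  stmt_16_general fun x hx a b => hprimal x a b hx
end
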